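/- In the quadratic setting, suppose the operator norm of Σ_{i=1}^M w_i K_i is strictly less than 1. Then A is a contraction on ℝ^d, the matrix Σ_{i=1}^M w_i (I − K_i) = I − Σ_{i=1}^M w_i K_i is invertible, and the unique fixed point of A is x̃ = (Σ_{i=1}^M w_i (I − K_i))^{-1} Σ_{i=1}^M w_i (I − K_i) x_i*. -/

import Mathlib

/-- Apply a real `d × d` matrix as a continuous linear map on Euclidean space. -/
noncomputable def mApp {d : ℕ} (A : Matrix (Fin d) (Fin d) ℝ) :
    EuclideanSpace ℝ (Fin d) →L[ℝ] EuclideanSpace ℝ (Fin d) :=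
  Matrix.toEuclideanCLM (𝕜 := ℝ) A

/-- The ℓ²-operator (spectral) norm of a real matrix. -/
noncomputable def opNorm {d : ℕ} (A : Matrix (Fin d) (Fin d) ℝ) : ℝ :=
  ‖mApp A‖

/-!
Each local map is affine, so the aggregate map is `x ↦ S x + b` with `S = ∑ wᵢ Kᵢ` and
`b = ∑ wᵢ (1 - Kᵢ) xᵢ*`. Its Lipschitz constant is `‖S‖ < 1`, the Neumann series inverts `1 - S`,
and the fixed-point equation `S x + b = x` reads `(1 - S) x = b`. Because the weights sum to `1`,
the matrix `1 - S` is `∑ wᵢ (1 - Kᵢ)`.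
-/

open Function

open scoped Ring

theorem sum_smul_sub_of_sum_eq_one {ι R V : Type*} [Ring R] [AddCommGroup V] [Module R V]
    {s : Finset ι} {w : ι → R} (hw : ∑ i ∈ s, w i = 1) (c : V) (v : ι → V) :
    ∑ i ∈ s, w i • (c - v i) = c - ∑ i ∈ s, w i • v i := by
  simp only [smul_sub, Finset.sum_sub_distrib, ← Finset.sum_smul, hw, one_smul]

theorem sum_smul_map_sub_add {ι R V : Type*} [CommRing R] [AddCommGroup V] [Module R V]
    [TopologicalSpace V] [IsTopologicalAddGroup V] [ContinuousConstSMul R V] (s : Finset ι)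
    (w : ι → R) (T : ι → V →L[R] V) (z : ι → V) (x : V) :
    ∑ i ∈ s, w i • (T i (x - z i) + z i) =
      (∑ i ∈ s, w i • T i) x + ∑ i ∈ s, w i • (1 - T i) (z i) := by
  have summand_eq (i : ι) :
      w i • (T i (x - z i) + z i) = (w i • T i) x + w i • (1 - T i) (z i) := by
    rw [smul_apply, ← smul_add, map_sub, sub_apply, one_apply_eq_self, sub_add_eq_add_sub,
      add_sub_assoc]
  simp only [summand_eq, Finset.sum_add_distrib, sum_apply]

theorem eq_ringInverse_apply_iff {R V : Type*} [Semiring R] [AddCommMonoid V] [Module R V]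
    [TopologicalSpace V] {T : V →L[R] V} (hT : IsUnit T) {x b : V} :
    x = T⁻¹ʳ b ↔ T x = b := by
  constructor
  · rintro rfl
    rw [← mul_apply_eq_comp, Ring.mul_inverse_cancel _ hT, one_apply_eq_self]
  · rintro rfl
    rw [← mul_apply_eq_comp, Ring.inverse_mul_cancel _ hT, one_apply_eq_self]

theorem isFixedPt_map_add_const_iff {R V : Type*} [Ring R] [AddCommGroup V] [Module R V]
    [TopologicalSpace V] [IsTopologicalAddGroup V] {T : V →L[R] V} (hT : IsUnit (1 - T)) {b x : V} :
    IsFixedPt (fun y ↦ T y + b) x ↔ x = (1 - T)⁻¹ʳ b := by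
  rw [eq_ringInverse_apply_iff hT, sub_apply, one_apply_eq_self, sub_eq_iff_eq_add', IsFixedPt,
    eq_comm, add_comm]

theorem contractingWith_map_add_const {𝕜 E : Type*} [NontriviallyNormedField 𝕜]
    [NormedAddCommGroup E] [NormedSpace 𝕜 E] {T : E →L[𝕜] E} (hT : ‖T‖ < 1) (b : E) :
    ContractingWith ‖T‖₊ fun x ↦ T x + b :=
  ⟨hT, by simpa only [add_zero] using T.lipschitz.add (LipschitzWith.const b)⟩

theorem map_ringInverse {M N F : Type*} [MonoidWithZero M] [MonoidWithZero N] [EquivLike F M N]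
    [MulEquivClass F M N] (f : F) (a : M) : f a⁻¹ʳ = (f a)⁻¹ʳ := by
  by_cases ha : IsUnit a
  · obtain ⟨u, rfl⟩ := ha
    rw [Ring.inverse_unit]
    exact (Ring.inverse_unit (Units.map (f : M →* N) u)).symm
  · have not_isUnit_map : ¬IsUnit (f a) := by rwa [MulEquiv.isUnit_map]
    rw [Ring.inverse_non_unit _ ha, Ring.inverse_non_unit _ not_isUnit_map, map_zero]

section Matrix

open Matrix

open scoped Matrix.Norms.L2Operator

variable {𝕜 n : Type*} [RCLike 𝕜] [Fintype n] [DecidableEq n]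

theorem toEuclideanCLM_inv (S : Matrix n n 𝕜) :
    toEuclideanCLM (𝕜 := 𝕜) S⁻¹ = (toEuclideanCLM (𝕜 := 𝕜) S)⁻¹ʳ := by
  rw [nonsing_inv_eq_ringInverse, map_ringInverse]

theorem isFixedPt_toEuclideanCLM_add_const_iff {S : Matrix n n 𝕜} (hS : IsUnit (1 - S))
    {b x : EuclideanSpace 𝕜 n} :
    IsFixedPt (fun y ↦ toEuclideanCLM (𝕜 := 𝕜) S y + b) x ↔
      x = toEuclideanCLM (𝕜 := 𝕜) (1 - S)⁻¹ b := by
  have isUnit_one_sub_map : IsUnit (1 - toEuclideanCLM (𝕜 := 𝕜) S) := by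
    simpa only [map_sub, map_one] using hS.map (toEuclideanCLM (n := n) (𝕜 := 𝕜))
  rw [isFixedPt_map_add_const_iff isUnit_one_sub_map, toEuclideanCLM_inv, map_sub, map_one]

theorem quadratic_fixed_point_general {ι : Type*} [Fintype ι] (K : ι → Matrix n n 𝕜)
    (xs : ι → EuclideanSpace 𝕜 n) (w : ι → 𝕜) (hw1 : ∑ i, w i = 1)
    (A : EuclideanSpace 𝕜 n → EuclideanSpace 𝕜 n)
    (hA : ∀ x, A x = ∑ i, w i • (toEuclideanCLM (𝕜 := 𝕜) (K i) (x - xs i) + xs i))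
    (hop : ‖∑ i, w i • K i‖ < 1) :
    ContractingWith ‖∑ i, w i • K i‖₊ A ∧
      IsUnit (∑ i, w i • (1 - K i)) ∧
      ∀ x, IsFixedPt A x ↔
        x = toEuclideanCLM (𝕜 := 𝕜) (∑ i, w i • (1 - K i))⁻¹
          (∑ i, w i • toEuclideanCLM (𝕜 := 𝕜) (1 - K i) (xs i)) := by
  have A_eq : A = fun x ↦ toEuclideanCLM (𝕜 := 𝕜) (∑ i, w i • K i) x +
      ∑ i, w i • toEuclideanCLM (𝕜 := 𝕜) (1 - K i) (xs i) := by
    funext x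
    rw [hA, sum_smul_map_sub_add]
    simp only [map_sum, map_smul, map_sub, map_one]
  have isUnit_one_sub : IsUnit (1 - ∑ i, w i • K i) := isUnit_one_sub_of_norm_lt_one hop
  rw [sum_smul_sub_of_sum_eq_one hw1, A_eq]
  exact ⟨contractingWith_map_add_const hop _, isUnit_one_sub,
    fun _ ↦ isFixedPt_toEuclideanCLM_add_const_iff isUnit_one_sub⟩

end Matrix

/-- In the quadratic setting, if `‖∑ wᵢ Kᵢ‖_op < 1` then the
aggregate operator is a contraction, `∑ wᵢ (I - Kᵢ)` is invertible, and the
unique fixed point is the stated one. -/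
theorem quadratic_fixed_point
    (d M : ℕ) (hd : 1 ≤ d) (hM : 1 ≤ M)
    (H P : Fin M → Matrix (Fin d) (Fin d) ℝ)
    (hHsymm : ∀ i, (H i).IsSymm) (hHpd : ∀ i, (H i).PosDef)
    (hPsymm : ∀ i, (P i).IsSymm) (hPpd : ∀ i, (P i).PosDef)
    (e : Fin M → EuclideanSpace ℝ (Fin d))
    (w : Fin M → ℝ) (hw : ∀ i, 0 < w i) (hw1 : ∑ i, w i = 1)
    (η : Fin M → ℝ) (hη : ∀ i, 0 < η i)
    (τ : Fin M → ℕ) (hτ : ∀ i, 1 ≤ τ i)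
    (K : Fin M → Matrix (Fin d) (Fin d) ℝ)
    (hK : ∀ i, K i = ((1 : Matrix (Fin d) (Fin d) ℝ) - η i • (P i * H i)) ^ τ i)
    (xs : Fin M → EuclideanSpace ℝ (Fin d))
    (hxs : ∀ i, xs i = mApp (H i)⁻¹ (e i))
    (A : EuclideanSpace ℝ (Fin d) → EuclideanSpace ℝ (Fin d))
    (hA : ∀ x, A x = ∑ i, w i • (mApp (K i) (x - xs i) + xs i))
    (hop : opNorm (∑ i, w i • K i) < 1) :
    (∃ c : NNReal, c < 1 ∧ LipschitzWith c A)
    ∧ IsUnit (∑ i, w i • ((1 : Matrix (Fin d) (Fin d) ℝ) - K i))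
    ∧ (A (mApp (∑ i, w i • ((1 : Matrix (Fin d) (Fin d) ℝ) - K i))⁻¹
          (∑ i, w i • mApp ((1 : Matrix (Fin d) (Fin d) ℝ) - K i) (xs i)))
        = mApp (∑ i, w i • ((1 : Matrix (Fin d) (Fin d) ℝ) - K i))⁻¹
          (∑ i, w i • mApp ((1 : Matrix (Fin d) (Fin d) ℝ) - K i) (xs i)))
    ∧ ∀ x, A x = x →
        x = mApp (∑ i, w i • ((1 : Matrix (Fin d) (Fin d) ℝ) - K i))⁻¹
          (∑ i, w i • mApp ((1 : Matrix (Fin d) (Fin d) ℝ) - K i) (xs i)) := by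
  obtain ⟨contracting, isUnit, isFixedPt_iff⟩ := quadratic_fixed_point_general K xs w hw1 A hA hop
  exact ⟨⟨_, contracting⟩, isUnit, (isFixedPt_iff _).2 rfl, fun x ↦ (isFixedPt_iff x).1⟩
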